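/- For every positive integer n and every bilinear form A : ℂ^n × ℂ^n → ℂ, one has (∑_{i=1}^n ∑_{j=1}^n |A(e_i, e_j)|^{4/3})^{3/4} ≤ √2 · sup_{x, y ∈ 𝔻^n} |A(x, y)|. (Littlewood's 4/3 inequality.) -/

import Mathlib

open Finset

/-!
The sum of the `|A(e_i, e_j)| ^ (4/3)` is controlled by the two mixed `ℓ¹(ℓ²)` norms of the
coefficient matrix: Hölder's inequality is applied to the inner and then to the outer sum, and
Minkowski's inequality turns an `ℓ²(ℓ¹)` norm into an `ℓ¹(ℓ²)` norm. Each mixed norm is at most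
`√2 · sup |A|`. Indeed, the sum of the `|A(e_i, w)|` is the supremum of `|A(z, w)|` over `z` in the
polydisc, and averaging it over `w` with independent random fourth roots of unity as entries
recovers the `ℓ²` norms of the rows by the `L¹`-`L²` Khinchine inequality. Fourth roots of unity
rather than signs are used because they bring the fourth moment down to twice the squared variance,
so that interpolating `L²` between `L¹` and `L⁴` already gives the constant `√2`.
-/

open scoped BigOperators

section Inequalities

variable {ι κ : Type*}

lemma sum_mul_rpow_two_thirds_le (s : Finset ι) {f g : ι → ℝ}
    (hf : ∀ i ∈ s, 0 ≤ f i) (hg : ∀ i ∈ s, 0 ≤ g i) :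
    ∑ i ∈ s, (f i * g i) ^ ((2 : ℝ) / 3) ≤
      ((∑ i ∈ s, f i) * √(∑ i ∈ s, g i ^ 2)) ^ ((2 : ℝ) / 3) := by
  have hpqr : Real.HolderTriple 1 2 (2 / 3) := ⟨by norm_num, by norm_num, by norm_num⟩
  have holder := Real.Lr_rpow_le_Lp_mul_Lq_of_nonneg s hpqr hf hg
  rw [Real.mul_rpow (sum_nonneg hf) (Real.sqrt_nonneg _), Real.sqrt_eq_rpow,
    ← Real.rpow_mul (sum_nonneg fun i _ ↦ sq_nonneg (g i))]
  simpa only [Real.rpow_one, Real.rpow_two, div_one,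
    show (1 : ℝ) / 2 * (2 / 3) = 2 / 3 / 2 by norm_num] using holder

lemma sqrt_sum_sq_sum_le (s : Finset ι) (t : Finset κ) (b : ι → κ → ℝ) :
    √(∑ i ∈ s, (∑ j ∈ t, b i j) ^ 2) ≤ ∑ j ∈ t, √(∑ i ∈ s, b i j ^ 2) := by
  have minkowski := norm_sum_le t fun j ↦ WithLp.toLp 2 fun i : s ↦ b i j
  simpa only [EuclideanSpace.norm_eq, WithLp.ofLp_sum, Finset.sum_apply, Real.norm_eq_abs, sq_abs,
    Finset.sum_coe_sort s fun i ↦ (∑ j ∈ t, b i j) ^ 2,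
    fun j ↦ Finset.sum_coe_sort s fun i ↦ b i j ^ 2] using minkowski

lemma sum_sum_rpow_four_thirds_le (s : Finset ι) (t : Finset κ) {b : ι → κ → ℝ}
    (hb : ∀ i j, 0 ≤ b i j) :
    ∑ i ∈ s, ∑ j ∈ t, b i j ^ ((4 : ℝ) / 3) ≤
      ((∑ i ∈ s, √(∑ j ∈ t, b i j ^ 2)) * ∑ j ∈ t, √(∑ i ∈ s, b i j ^ 2)) ^ ((2 : ℝ) / 3) := by
  have hrow (i : ι) : 0 ≤ ∑ j ∈ t, b i j := sum_nonneg fun j _ ↦ hb i j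
  calc ∑ i ∈ s, ∑ j ∈ t, b i j ^ ((4 : ℝ) / 3)
      = ∑ i ∈ s, ∑ j ∈ t, (b i j * b i j) ^ ((2 : ℝ) / 3) := by
        refine sum_congr rfl fun i _ ↦ sum_congr rfl fun j _ ↦ ?_
        rw [← sq, ← Real.rpow_natCast, ← Real.rpow_mul (hb i j)]
        norm_num
    _ ≤ ∑ i ∈ s, (√(∑ j ∈ t, b i j ^ 2) * ∑ j ∈ t, b i j) ^ ((2 : ℝ) / 3) := by
        simp only [mul_comm √_]
        exact sum_le_sum fun i _ ↦
          sum_mul_rpow_two_thirds_le t (fun j _ ↦ hb i j) (fun j _ ↦ hb i j)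
    _ ≤ ((∑ i ∈ s, √(∑ j ∈ t, b i j ^ 2)) * √(∑ i ∈ s, (∑ j ∈ t, b i j) ^ 2)) ^ ((2 : ℝ) / 3) :=
        sum_mul_rpow_two_thirds_le s (fun i _ ↦ Real.sqrt_nonneg _) (fun i _ ↦ hrow i)
    _ ≤ ((∑ i ∈ s, √(∑ j ∈ t, b i j ^ 2)) * ∑ j ∈ t, √(∑ i ∈ s, b i j ^ 2)) ^ ((2 : ℝ) / 3) := by
        gcongr
        exact sqrt_sum_sq_sum_le s t b

lemma expect_sq_pow_three_le (s : Finset ι) {f : ι → ℝ} (hf : ∀ i, 0 ≤ f i) :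
    (𝔼 i ∈ s, f i ^ 2) ^ 3 ≤ (𝔼 i ∈ s, f i) ^ 2 * 𝔼 i ∈ s, f i ^ 4 := by
  have h₁ : 0 ≤ 𝔼 i ∈ s, f i := expect_nonneg fun i _ ↦ hf i
  have h₄ : 0 ≤ 𝔼 i ∈ s, f i ^ 4 := expect_nonneg fun i _ ↦ by positivity
  have holder : 𝔼 i ∈ s, f i ^ 2 ≤
      (𝔼 i ∈ s, f i) ^ ((2 : ℝ) / 3) * (𝔼 i ∈ s, f i ^ 4) ^ ((1 : ℝ) / 3) := by
    convert Real.compact_inner_le_weight_mul_Lp_of_nonneg s (p := 3) (by norm_num) hf hf using 3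
    · exact sq _
    · norm_num
    · refine expect_congr rfl fun i _ ↦ ?_
      norm_cast
      ring
    · norm_num
  calc (𝔼 i ∈ s, f i ^ 2) ^ 3
      ≤ ((𝔼 i ∈ s, f i) ^ ((2 : ℝ) / 3) * (𝔼 i ∈ s, f i ^ 4) ^ ((1 : ℝ) / 3)) ^ 3 := by gcongr
    _ = (𝔼 i ∈ s, f i) ^ 2 * 𝔼 i ∈ s, f i ^ 4 := by
      rw [mul_pow, ← Real.rpow_mul_natCast h₁, ← Real.rpow_mul_natCast h₄]
      norm_num

end Inequalities

section Resampling

variable {ι α E M : Type*} [Fintype ι] [DecidableEq ι] [Fintype α] [Nonempty α] [AddCommMonoid E]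
  [AddCommMonoid M] [Module ℚ≥0 M]

lemma expect_expect_update (i : ι) (f : (ι → α) → M) :
    𝔼 ε, 𝔼 k, f (Function.update ε i k) = 𝔼 ε, f ε := by
  have hinv : Function.Involutive
      fun p : (ι → α) × α ↦ (Function.update p.1 i p.2, p.1 i) := fun p ↦ by simp
  calc 𝔼 ε, 𝔼 k, f (Function.update ε i k)
      = 𝔼 p : (ι → α) × α, f (Function.update p.1 i p.2) :=
        (expect_product univ univ fun p : (ι → α) × α ↦ f (Function.update p.1 i p.2)).symm
    _ = 𝔼 p : (ι → α) × α, f p.1 := Fintype.expect_bijective _ hinv.bijective _ _ fun _ ↦ rfl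
    _ = 𝔼 ε, 𝔼 _k : α, f ε := expect_product univ univ fun p : (ι → α) × α ↦ f p.1
    _ = 𝔼 ε, f ε := by simp only [Fintype.expect_const]

lemma expect_apply_sum_insert {s : Finset ι} {i : ι} (hi : i ∉ s) (X : ι → α → E) (f : E → M) :
    𝔼 ε : ι → α, f (∑ j ∈ insert i s, X j (ε j)) =
      𝔼 ε : ι → α, 𝔼 k, f (X i k + ∑ j ∈ s, X j (ε j)) := by
  rw [← expect_expect_update i]
  refine expect_congr rfl fun ε _ ↦ expect_congr rfl fun k _ ↦ ?_
  rw [sum_insert hi, Function.update_self]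
  congr 2
  refine sum_congr rfl fun j hj ↦ ?_
  rw [Function.update_of_ne (ne_of_mem_of_not_mem hj hi)]

end Resampling

section Khinchine

open Complex (I)

variable {ι E : Type*} [NormedAddCommGroup E] [InnerProductSpace ℂ E]

lemma norm_I_pow_smul_add_sq (k : ℕ) (x y : E) :
    ‖I ^ k • x + y‖ ^ 2 = ‖x‖ ^ 2 + ‖y‖ ^ 2 + 2 * ((-I) ^ k * inner ℂ x y).re := by
  rw [norm_add_sq (𝕜 := ℂ), norm_smul, inner_smul_left, norm_pow, Complex.norm_I, one_pow,
    one_mul, map_pow, Complex.conj_I, RCLike.re_to_complex]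
  ring

lemma sum_apply_re_neg_I_pow_mul {M : Type*} [AddCommMonoid M] (f : ℝ → M) (z : ℂ) :
    ∑ k : Fin 4, f ((-I) ^ (k : ℕ) * z).re = f z.re + f z.im + f (-z.re) + f (-z.im) := by
  simp [Fin.sum_univ_four, pow_succ]

lemma expect_norm_I_pow_smul_add_sq (x y : E) :
    𝔼 k : Fin 4, ‖I ^ (k : ℕ) • x + y‖ ^ 2 = ‖x‖ ^ 2 + ‖y‖ ^ 2 := by
  simp only [norm_I_pow_smul_add_sq, Fintype.expect_eq_sum_div_card, Fintype.card_fin]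
  rw [sum_apply_re_neg_I_pow_mul (‖x‖ ^ 2 + ‖y‖ ^ 2 + 2 * ·)]
  push_cast
  ring

lemma expect_norm_I_pow_smul_add_pow_four_le (x y : E) :
    𝔼 k : Fin 4, ‖I ^ (k : ℕ) • x + y‖ ^ 4 ≤ ‖x‖ ^ 4 + 4 * (‖x‖ ^ 2 * ‖y‖ ^ 2) + ‖y‖ ^ 4 := by
  have cauchy_schwarz : ‖inner ℂ x y‖ ^ 2 ≤ ‖x‖ ^ 2 * ‖y‖ ^ 2 := by
    rw [← mul_pow]
    gcongr
    exact norm_inner_le_norm x y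
  calc 𝔼 k : Fin 4, ‖I ^ (k : ℕ) • x + y‖ ^ 4
      = 𝔼 k : Fin 4, (‖x‖ ^ 2 + ‖y‖ ^ 2 + 2 * ((-I) ^ (k : ℕ) * inner ℂ x y).re) ^ 2 := by
        simp only [← norm_I_pow_smul_add_sq, ← pow_mul]
    _ = (‖x‖ ^ 2 + ‖y‖ ^ 2) ^ 2 + 2 * ‖inner ℂ x y‖ ^ 2 := by
        rw [Fintype.expect_eq_sum_div_card, Fintype.card_fin,
          sum_apply_re_neg_I_pow_mul (fun t ↦ (‖x‖ ^ 2 + ‖y‖ ^ 2 + 2 * t) ^ 2), Complex.sq_norm,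
          Complex.normSq_apply]
        push_cast
        ring
    _ ≤ ‖x‖ ^ 4 + 4 * (‖x‖ ^ 2 * ‖y‖ ^ 2) + ‖y‖ ^ 4 := by linarith

variable [Fintype ι] [DecidableEq ι]

lemma expect_norm_sum_I_pow_smul_sq (s : Finset ι) (a : ι → E) :
    𝔼 ε : ι → Fin 4, ‖∑ j ∈ s, I ^ (ε j : ℕ) • a j‖ ^ 2 = ∑ j ∈ s, ‖a j‖ ^ 2 := by
  induction s using Finset.induction_on with
  | empty => simp
  | insert i s hi ih =>
    rw [expect_apply_sum_insert hi (fun j (k : Fin 4) ↦ I ^ (k : ℕ) • a j) (‖·‖ ^ 2),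
      sum_insert hi, ← ih]
    simp only [expect_norm_I_pow_smul_add_sq, expect_add_distrib, Fintype.expect_const]

lemma expect_norm_sum_I_pow_smul_pow_four_le (s : Finset ι) (a : ι → E) :
    𝔼 ε : ι → Fin 4, ‖∑ j ∈ s, I ^ (ε j : ℕ) • a j‖ ^ 4 ≤ 2 * (∑ j ∈ s, ‖a j‖ ^ 2) ^ 2 := by
  induction s using Finset.induction_on with
  | empty => simp
  | insert i s hi ih =>
    rw [expect_apply_sum_insert hi (fun j (k : Fin 4) ↦ I ^ (k : ℕ) • a j) (‖·‖ ^ 4),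
      sum_insert hi]
    set X : (ι → Fin 4) → E := fun ε ↦ ∑ j ∈ s, I ^ (ε j : ℕ) • a j
    set σ : ℝ := ∑ j ∈ s, ‖a j‖ ^ 2
    calc 𝔼 ε, 𝔼 k : Fin 4, ‖I ^ (k : ℕ) • a i + X ε‖ ^ 4
        ≤ 𝔼 ε, (‖a i‖ ^ 4 + 4 * (‖a i‖ ^ 2 * ‖X ε‖ ^ 2) + ‖X ε‖ ^ 4) :=
          expect_le_expect fun ε _ ↦ expect_norm_I_pow_smul_add_pow_four_le (a i) (X ε)
      _ = ‖a i‖ ^ 4 + 4 * (‖a i‖ ^ 2 * σ) + 𝔼 ε, ‖X ε‖ ^ 4 := by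
          simp only [expect_add_distrib, Fintype.expect_const, ← mul_expect, X, σ,
            expect_norm_sum_I_pow_smul_sq]
      _ ≤ ‖a i‖ ^ 4 + 4 * (‖a i‖ ^ 2 * σ) + 2 * σ ^ 2 := by gcongr
      _ ≤ 2 * (‖a i‖ ^ 2 + σ) ^ 2 := by nlinarith [sq_nonneg (‖a i‖ ^ 2)]

theorem sqrt_sum_norm_sq_le_sqrt_two_mul_expect_norm_sum (s : Finset ι) (a : ι → E) :
    √(∑ j ∈ s, ‖a j‖ ^ 2) ≤ √2 * 𝔼 ε : ι → Fin 4, ‖∑ j ∈ s, I ^ (ε j : ℕ) • a j‖ := by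
  set σ : ℝ := ∑ j ∈ s, ‖a j‖ ^ 2
  set m : ℝ := 𝔼 ε : ι → Fin 4, ‖∑ j ∈ s, I ^ (ε j : ℕ) • a j‖
  have hm : 0 ≤ m := expect_nonneg fun ε _ ↦ norm_nonneg _
  have hσ : 0 ≤ σ := sum_nonneg fun j _ ↦ sq_nonneg _
  obtain hσ | hσ := hσ.eq_or_lt
  · rw [← hσ, Real.sqrt_zero]
    positivity
  have hmoments : σ ^ 3 ≤ m ^ 2 * (2 * σ ^ 2) := by
    calc σ ^ 3 = (𝔼 ε : ι → Fin 4, ‖∑ j ∈ s, I ^ (ε j : ℕ) • a j‖ ^ 2) ^ 3 := by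
          rw [expect_norm_sum_I_pow_smul_sq]
      _ ≤ m ^ 2 * 𝔼 ε : ι → Fin 4, ‖∑ j ∈ s, I ^ (ε j : ℕ) • a j‖ ^ 4 :=
          expect_sq_pow_three_le univ fun ε ↦ norm_nonneg _
      _ ≤ m ^ 2 * (2 * σ ^ 2) := by
          gcongr
          exact expect_norm_sum_I_pow_smul_pow_four_le s a
  have hσm : σ ≤ 2 * m ^ 2 := le_of_mul_le_mul_right (by linarith) (pow_pos hσ 2)
  calc √σ ≤ √(2 * m ^ 2) := Real.sqrt_le_sqrt hσm
    _ = √2 * m := by rw [Real.sqrt_mul zero_le_two, Real.sqrt_sq hm]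

end Khinchine

section Polydisc

lemma norm_apply_apply_le_sSup_ball {E F G : Type*} [NormedAddCommGroup E] [NormedSpace ℂ E]
    [NormedAddCommGroup F] [NormedSpace ℂ F] [NormedAddCommGroup G] [NormedSpace ℂ G]
    (A : E →L[ℂ] F →L[ℂ] G) {z : E} {w : F} (hz : ‖z‖ ≤ 1) (hw : ‖w‖ ≤ 1) :
    ‖A z w‖ ≤ sSup {x : ℝ | ∃ z w, ‖z‖ < 1 ∧ ‖w‖ < 1 ∧ x = ‖A z w‖} := by
  set S : Set ℝ := {x | ∃ z w, ‖z‖ < 1 ∧ ‖w‖ < 1 ∧ x = ‖A z w‖}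
  have hbdd : BddAbove S := by
    refine ⟨‖A‖ * 1 * 1, ?_⟩
    rintro _ ⟨z, w, hz, hw, rfl⟩
    exact A.le_of_opNorm₂_le_of_le le_rfl hz.le hw.le
  have hmem : (z, w) ∈ closure (Metric.ball (0 : E) 1 ×ˢ Metric.ball (0 : F) 1) := by
    rw [closure_prod_eq, closure_ball 0 one_ne_zero, closure_ball 0 one_ne_zero]
    simpa using ⟨hz, hw⟩
  have hclosed : IsClosed {p : E × F | ‖A p.1 p.2‖ ≤ sSup S} :=
    isClosed_le (by fun_prop) continuous_const
  refine closure_minimal (fun p hp ↦ ?_) hclosed hmem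
  rw [Set.mem_prod, mem_ball_zero_iff, mem_ball_zero_iff] at hp
  exact le_csSup hbdd ⟨p.1, p.2, hp.1, hp.2, rfl⟩

variable {ι κ : Type*} [Fintype ι] [DecidableEq ι] [Fintype κ] [DecidableEq κ]

lemma apply_eq_sum_smul_apply_single {R M : Type*} [Semiring R] [AddCommMonoid M] [Module R M]
    (φ : (ι → R) →ₗ[R] M) (z : ι → R) : φ z = ∑ i, z i • φ (Pi.single i 1) := by
  conv_lhs => rw [pi_eq_sum_univ' z]
  simp only [map_sum, map_smul]

lemma sum_norm_apply_single_le {𝕜 : Type*} [RCLike 𝕜] (φ : (ι → 𝕜) →ₗ[𝕜] 𝕜) {M : ℝ}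
    (hφ : ∀ z, ‖z‖ ≤ 1 → ‖φ z‖ ≤ M) : ∑ i, ‖φ (Pi.single i 1)‖ ≤ M := by
  choose c hc hcφ using fun i ↦ RCLike.exists_norm_eq_mul_self (φ (Pi.single i 1))
  have hφc : φ c = ((∑ i, ‖φ (Pi.single i 1)‖ : ℝ) : 𝕜) := by
    rw [apply_eq_sum_smul_apply_single φ c]
    push_cast
    exact sum_congr rfl fun i _ ↦ (hcφ i).symm
  calc ∑ i, ‖φ (Pi.single i 1)‖ = ‖φ c‖ := by
        rw [hφc, RCLike.norm_of_nonneg (sum_nonneg fun i _ ↦ norm_nonneg _)]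
    _ ≤ M := hφ c <| (pi_norm_le_iff_of_nonneg zero_le_one).2 fun i ↦ (hc i).le

theorem sum_sqrt_sum_norm_sq_apply_single_le {A : (ι → ℂ) →ₗ[ℂ] (κ → ℂ) →ₗ[ℂ] ℂ} {M : ℝ}
    (hA : ∀ z w, ‖z‖ ≤ 1 → ‖w‖ ≤ 1 → ‖A z w‖ ≤ M) :
    ∑ i, √(∑ j, ‖A (Pi.single i 1) (Pi.single j 1)‖ ^ 2) ≤ √2 * M := by
  let w (ε : κ → Fin 4) (j : κ) : ℂ := Complex.I ^ (ε j : ℕ)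
  have hw (ε : κ → Fin 4) : ‖w ε‖ ≤ 1 :=
    (pi_norm_le_iff_of_nonneg zero_le_one).2 fun j ↦ by simp [w]
  calc ∑ i, √(∑ j, ‖A (Pi.single i 1) (Pi.single j 1)‖ ^ 2)
      ≤ ∑ i, √2 * 𝔼 ε, ‖∑ j, w ε j • A (Pi.single i 1) (Pi.single j 1)‖ :=
        sum_le_sum fun i _ ↦ sqrt_sum_norm_sq_le_sqrt_two_mul_expect_norm_sum univ _
    _ = √2 * 𝔼 ε, ∑ i, ‖A (Pi.single i 1) (w ε)‖ := by
        simp only [← apply_eq_sum_smul_apply_single, ← mul_sum, expect_sum_comm]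
    _ ≤ √2 * M := by
        gcongr
        exact expect_le univ_nonempty fun ε _ ↦
          sum_norm_apply_single_le (A.flip (w ε)) fun z hz ↦ hA z (w ε) hz (hw ε)

theorem littlewood_four_thirds_general (A : (ι → ℂ) →ₗ[ℂ] (κ → ℂ) →ₗ[ℂ] ℂ) :
    (∑ i, ∑ j, ‖A (Pi.single i 1) (Pi.single j 1)‖ ^ ((4 : ℝ) / 3)) ^ ((3 : ℝ) / 4) ≤
      √2 * sSup {x : ℝ | ∃ (z : ι → ℂ) (w : κ → ℂ),
        (∀ k, ‖z k‖ < 1) ∧ (∀ k, ‖w k‖ < 1) ∧ x = ‖A z w‖} := by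
  simp only [← pi_norm_lt_iff one_pos]
  set M : ℝ := sSup {x | ∃ z w, ‖z‖ < 1 ∧ ‖w‖ < 1 ∧ x = ‖A z w‖}
  have hA (z : ι → ℂ) (w : κ → ℂ) (hz : ‖z‖ ≤ 1) (hw : ‖w‖ ≤ 1) : ‖A z w‖ ≤ M :=
    norm_apply_apply_le_sSup_ball A.toContinuousBilinearMap hz hw
  have hM : 0 ≤ M := by simpa using hA 0 0 (by simp) (by simp)
  have hrows := sum_sqrt_sum_norm_sq_apply_single_le hA
  have hcols := sum_sqrt_sum_norm_sq_apply_single_le (A := A.flip) fun w z hw hz ↦ hA z w hz hw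
  calc _ ≤ (((√2 * M) * (√2 * M)) ^ ((2 : ℝ) / 3)) ^ ((3 : ℝ) / 4) := by
        gcongr
        refine (sum_sum_rpow_four_thirds_le univ univ fun i j ↦ norm_nonneg _).trans ?_
        gcongr ?_ ^ _
        exact mul_le_mul hrows hcols (by positivity) (by positivity)
    _ = √2 * M := by
        rw [← Real.rpow_mul (by positivity), ← sq, ← Real.rpow_natCast_mul (by positivity)]
        norm_num

end Polydisc

/-- Littlewood's 4/3 inequality for bilinear forms on `ℂ^n × ℂ^n`. -/
theorem littlewood_four_thirds (n : ℕ) (hn : 0 < n)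
    (A : (Fin n → ℂ) →ₗ[ℂ] (Fin n → ℂ) →ₗ[ℂ] ℂ) :
    (∑ i : Fin n, ∑ j : Fin n,
        ‖A (Pi.single i 1) (Pi.single j 1)‖ ^ ((4 : ℝ) / 3)) ^ ((3 : ℝ) / 4)
      ≤ Real.sqrt 2 *
        sSup {x : ℝ | ∃ z w : Fin n → ℂ,
          (∀ k, ‖z k‖ < 1) ∧ (∀ k, ‖w k‖ < 1) ∧ x = ‖A z w‖} :=
  littlewood_four_thirds_general A
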